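/- Let H be a complex inner product space, L : ℕ with L ≥ 1, and ε : ℝ with 0 ≤ ε and ε * L < 1. Let φ : Fin L → H be unit vectors with ‖⟪φ i, φ j⟫_ℂ‖ ≤ ε for all i ≠ j, and let a : Fin L → ℂ be such that ‖∑ i, a i • φ i‖ = 1. Then ∑ i, ‖a i‖^2 ≤ 1 / (1 − ε * L). (This is the normalization bound in the paper's analysis of recovering from sparse superpositions of Pauli errors: if the corrupted code-states are ε-pairwise-orthogonal and their superposition is normalized, the coefficient mass is at most 1/(1 − εL).) -/

import Mathlib

open scoped InnerProductSpace

/-! The Gram matrix of `φ` is Hermitian with unit diagonal and off-diagonal entries of modulus at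
most `ε`. By Gershgorin's theorem its spectrum lies above `1 - ε (L - 1) ≥ 1 - ε L`, and the
squared norm of `∑ aᵢ φᵢ` is its quadratic form at `a`. The Gershgorin bound is obtained directly
from `2 |aᵢ| |aⱼ| ≤ |aᵢ|² + |aⱼ|²`, which absorbs each off-diagonal term into the diagonal. -/

section GramBounds

variable {𝕜 E ι : Type*} [RCLike 𝕜] [SeminormedAddCommGroup E] [InnerProductSpace 𝕜 E]

theorem norm_sum_sq_eq_sum_norm_sq_add_sum_sum_erase [DecidableEq ι] (s : Finset ι) (v : ι → E) :
    ‖∑ i ∈ s, v i‖ ^ 2 =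
      ∑ i ∈ s, ‖v i‖ ^ 2 + ∑ i ∈ s, ∑ j ∈ s.erase i, RCLike.re ⟪v i, v j⟫_𝕜 := by
  rw [← inner_self_eq_norm_sq (𝕜 := 𝕜), sum_inner, map_sum, ← Finset.sum_add_distrib]
  refine Finset.sum_congr rfl fun i hi ↦ ?_
  rw [inner_sum, map_sum, ← Finset.add_sum_erase s _ hi, inner_self_eq_norm_sq]

theorem sum_norm_sq_sub_sum_sum_erase_norm_inner_le_norm_sum_sq [DecidableEq ι]
    (s : Finset ι) (v : ι → E) :
    ∑ i ∈ s, ‖v i‖ ^ 2 - ∑ i ∈ s, ∑ j ∈ s.erase i, ‖⟪v i, v j⟫_𝕜‖ ≤ ‖∑ i ∈ s, v i‖ ^ 2 := by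
  rw [norm_sum_sq_eq_sum_norm_sq_add_sum_sum_erase (𝕜 := 𝕜), sub_eq_add_neg]
  simp only [← Finset.sum_neg_distrib]
  gcongr with i _ j _
  exact neg_le_of_abs_le (RCLike.abs_re_le_norm _)

theorem sum_sum_erase_mul_mul_le_sum_sum_erase_mul_sq {R : Type*} [Field R] [LinearOrder R]
    [IsStrictOrderedRing R] [DecidableEq ι] (s : Finset ι) {w : ι → ι → R}
    (w_nonneg : ∀ i j, 0 ≤ w i j) (w_symm : ∀ i j, w i j = w j i) (b : ι → R) :
    ∑ i ∈ s, ∑ j ∈ s.erase i, w i j * (b i * b j) ≤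
      ∑ i ∈ s, (∑ j ∈ s.erase i, w i j) * b i ^ 2 := by
  have swap : ∑ i ∈ s, ∑ j ∈ s.erase i, w i j * b j ^ 2 =
      ∑ i ∈ s, ∑ j ∈ s.erase i, w i j * b i ^ 2 := by
    rw [Finset.sum_comm' (t' := s) (s' := s.erase) (by grind)]
    simp only [w_symm]
  calc ∑ i ∈ s, ∑ j ∈ s.erase i, w i j * (b i * b j)
      ≤ ∑ i ∈ s, ∑ j ∈ s.erase i, w i j * ((b i ^ 2 + b j ^ 2) / 2) := by
        gcongr with i _ j _
        · exact w_nonneg i j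
        · linarith [two_mul_le_add_sq (b i) (b j)]
    _ = (∑ i ∈ s, ∑ j ∈ s.erase i, w i j * b i ^ 2 +
          ∑ i ∈ s, ∑ j ∈ s.erase i, w i j * b j ^ 2) / 2 := by
        simp only [mul_div_assoc', mul_add, ← Finset.sum_div, Finset.sum_add_distrib]
    _ = ∑ i ∈ s, (∑ j ∈ s.erase i, w i j) * b i ^ 2 := by
        rw [swap, add_self_div_two]
        simp only [Finset.sum_mul]

theorem mul_sum_norm_sq_le_norm_sum_smul_sq_of_gershgorin [DecidableEq ι] {s : Finset ι}
    {φ : ι → E} {c : ℝ} (hc : ∀ i ∈ s, c ≤ ‖φ i‖ ^ 2 - ∑ j ∈ s.erase i, ‖⟪φ i, φ j⟫_𝕜‖)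
    (a : ι → 𝕜) :
    c * ∑ i ∈ s, ‖a i‖ ^ 2 ≤ ‖∑ i ∈ s, a i • φ i‖ ^ 2 := by
  have norm_inner_smul (i j : ι) :
      ‖⟪a i • φ i, a j • φ j⟫_𝕜‖ = ‖⟪φ i, φ j⟫_𝕜‖ * (‖a i‖ * ‖a j‖) := by
    rw [inner_smul_left, inner_smul_right, norm_mul, norm_mul, RCLike.norm_conj]
    ring
  calc c * ∑ i ∈ s, ‖a i‖ ^ 2
      ≤ ∑ i ∈ s, (‖φ i‖ ^ 2 - ∑ j ∈ s.erase i, ‖⟪φ i, φ j⟫_𝕜‖) * ‖a i‖ ^ 2 := by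
        rw [Finset.mul_sum]
        gcongr with i hi
        exact hc i hi
    _ = ∑ i ∈ s, ‖a i • φ i‖ ^ 2 -
          ∑ i ∈ s, (∑ j ∈ s.erase i, ‖⟪φ i, φ j⟫_𝕜‖) * ‖a i‖ ^ 2 := by
        simp only [sub_mul, Finset.sum_sub_distrib, norm_smul, mul_pow, mul_comm (‖φ _‖ ^ 2)]
    _ ≤ ∑ i ∈ s, ‖a i • φ i‖ ^ 2 -
          ∑ i ∈ s, ∑ j ∈ s.erase i, ‖⟪a i • φ i, a j • φ j⟫_𝕜‖ := by
        simp only [norm_inner_smul]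
        exact sub_le_sub_left (sum_sum_erase_mul_mul_le_sum_sum_erase_mul_sq s
          (fun _ _ ↦ norm_nonneg _) (fun i j ↦ norm_inner_symm (φ i) (φ j)) (‖a ·‖)) _
    _ ≤ ‖∑ i ∈ s, a i • φ i‖ ^ 2 :=
        sum_norm_sq_sub_sum_sum_erase_norm_inner_le_norm_sum_sq s _

theorem sum_erase_le_mul_card_sub_one {R : Type*} [CommRing R] [PartialOrder R]
    [IsOrderedAddMonoid R] [DecidableEq ι] {s : Finset ι} {i : ι} (hi : i ∈ s) {f : ι → R} {ε : R}
    (hf : ∀ j ∈ s.erase i, f j ≤ ε) :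
    ∑ j ∈ s.erase i, f j ≤ ε * (s.card - 1) := by
  simpa only [nsmul_eq_mul, Finset.cast_card_erase_of_mem hi, mul_comm] using
    Finset.sum_le_card_nsmul _ f ε hf

theorem coefficient_mass_bound_general {s : Finset ι} {φ : ι → E} {ε : ℝ}
    (hφ : ∀ i ∈ s, ‖φ i‖ = 1)
    (hortho : (s : Set ι).Pairwise fun i j ↦ ‖⟪φ i, φ j⟫_𝕜‖ ≤ ε)
    (hε : ε * (s.card - 1) < 1) (a : ι → 𝕜) :
    ∑ i ∈ s, ‖a i‖ ^ 2 ≤ ‖∑ i ∈ s, a i • φ i‖ ^ 2 / (1 - ε * (s.card - 1)) := by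
  classical
  rw [le_div_iff₀' (sub_pos.mpr hε)]
  refine mul_sum_norm_sq_le_norm_sum_smul_sq_of_gershgorin (fun i hi ↦ ?_) a
  rw [hφ i hi, one_pow]
  gcongr
  exact sum_erase_le_mul_card_sub_one hi fun j hj ↦
    hortho hi (Finset.mem_of_mem_erase hj) (Finset.ne_of_mem_erase hj).symm

end GramBounds

/-- Normalization bound for sparse superpositions of approximately pairwise-orthogonal unit
vectors: if `‖∑ aᵢ φᵢ‖ = 1` and `‖⟪φ i, φ j⟫‖ ≤ ε` for `i ≠ j`, then the coefficient mass
satisfies `∑ ‖aᵢ‖² ≤ 1 / (1 − εL)`. -/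
theorem coefficient_mass_bound
    {H : Type*} [NormedAddCommGroup H] [InnerProductSpace ℂ H]
    (L : ℕ) (hL : 1 ≤ L) (ε : ℝ) (hε : 0 ≤ ε) (hεL : ε * L < 1)
    (φ : Fin L → H) (hφ : ∀ i, ‖φ i‖ = 1)
    (hortho : ∀ i j, i ≠ j → ‖⟪φ i, φ j⟫_ℂ‖ ≤ ε)
    (a : Fin L → ℂ) (ha : ‖∑ i, a i • φ i‖ = 1) :
    (∑ i, ‖a i‖ ^ 2 : ℝ) ≤ 1 / (1 - ε * L) := by
  have sharp_le : ε * ((Finset.univ : Finset (Fin L)).card - 1) ≤ ε * L := by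
    simpa [mul_sub] using hε
  calc ∑ i, ‖a i‖ ^ 2
      ≤ 1 / (1 - ε * ((Finset.univ : Finset (Fin L)).card - 1)) := by
        simpa only [ha, one_pow] using coefficient_mass_bound_general (fun i _ ↦ hφ i)
          (fun i _ j _ ↦ hortho i j) (sharp_le.trans_lt hεL) a
    _ ≤ 1 / (1 - ε * L) := by gcongr
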